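/- arXiv:1906.05515 — 2 statements merged into one kernel-verified Lean document; each statement's English description precedes it below -/
import Mathlib

section
/- Let S be a right coherent monoid, let M be a subsemigroup of S which has an identity element e, and let E ⊆ E(S) be a set of idempotents of S such that: (a) e ∈ E; (b) the relation ~H_E is a right congruence on S; (c) M is exactly the ~H_E-class of e; and (d) for any u, v ∈ S, if e ~R_E u and u ~H_E v, then there exist p, q ∈ S with u = u(pq), v = v(pq), and up, vp ∈ M. Then M, regarded as a monoid with identity e, is right coherent. -/
def IsRightCongruence {M : Type*} [Monoid M] (r : M → M → Prop) : Prop :=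
  Equivalence r ∧ ∀ a b c : M, r a b → r (a * c) (b * c)

def RCongGenBy {M : Type*} [Monoid M] (H : Set (M × M)) (r : M → M → Prop) : Prop :=
  IsRightCongruence r ∧ (∀ p ∈ H, r p.1 p.2) ∧
    ∀ r' : M → M → Prop, IsRightCongruence r' → (∀ p ∈ H, r' p.1 p.2) →
      ∀ x y : M, r x y → r' x y

def FGRightCongruence {M : Type*} [Monoid M] (r : M → M → Prop) : Prop :=
  ∃ H : Set (M × M), H.Finite ∧ RCongGenBy H r

def RightCoherent (M : Type*) [Monoid M] : Prop :=
  ∀ r : M → M → Prop, FGRightCongruence r → ∀ a b : M,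
    (∃ C : Finset M,
      {x : M | (∃ s : M, r x (a * s)) ∧ (∃ t : M, r x (b * t))} =
        ⋃ c ∈ C, {x : M | ∃ s : M, r x (c * s)}) ∧
    FGRightCongruence (fun u v : M => r (a * u) (a * v))

/-!
Let `φ` embed `N` into `S` as the class of the idempotent `φ 1` under a right congruence `H`.
A right congruence on `N` is the restriction of the right congruence it generates on `S`: that one
lies inside the largest extension contained in `H`, and the latter exists because `H` moves every
product `φ n * t` in and out of `φ N` simultaneously for all `n`. Right coherence of `S` then
produces finitely many generators in `S`, and condition (d) replaces each of them by elements of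
`φ N` that generate the same subact. Generators not covered by (d) never reach `φ N` and can be
dropped.
-/

section

open Set

section RightCongruence

variable {M : Type*} [Monoid M] {r : M → M → Prop}

theorem IsRightCongruence.mul_right (hr : IsRightCongruence r) {a b : M} (h : r a b) (c : M) :
    r (a * c) (b * c) :=
  hr.2 a b c h

theorem IsRightCongruence.comap {N : Type*} [Monoid N] (hr : IsRightCongruence r) (φ : N →ₙ* M) :
    IsRightCongruence fun m n => r (φ m) (φ n) :=
  ⟨hr.1.comap φ, fun a b c h => by simpa only [map_mul] using hr.mul_right h (φ c)⟩

theorem IsRightCongruence.comap_mul_left (hr : IsRightCongruence r) (a : M) :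
    IsRightCongruence fun u v => r (a * u) (a * v) :=
  ⟨hr.1.comap (a * ·), fun u v c h => by simpa only [mul_assoc] using hr.mul_right h c⟩

theorem exists_rCongGenBy (G : Set (M × M)) : ∃ r : M → M → Prop, RCongGenBy G r := by
  refine ⟨fun x y => ∀ r' : M → M → Prop,
    IsRightCongruence r' → (∀ p ∈ G, r' p.1 p.2) → r' x y, ⟨⟨?_, ?_, ?_⟩, ?_⟩, ?_, ?_⟩
  · exact fun x r' hr' _ => hr'.1.refl x
  · exact fun h r' hr' hG => hr'.1.symm (h r' hr' hG)
  · exact fun h₁ h₂ r' hr' hG => hr'.1.trans (h₁ r' hr' hG) (h₂ r' hr' hG)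
  · exact fun a b c h r' hr' hG => hr'.mul_right (h r' hr' hG) c
  · exact fun p hp r' _ hG => hG p hp
  · exact fun r' hr' hG x y h => h r' hr' hG

/-- The subact `(aρ)S` of the quotient act `S/ρ`, encoded as the union in `S` of the `ρ`-classes
that belong to it. -/
def principalSubact (r : M → M → Prop) (a : M) : Set M :=
  {x | ∃ s, r x (a * s)}

theorem IsRightCongruence.principalSubact_subset_of_rel (hr : IsRightCongruence r) {a b s : M}
    (h : r a (b * s)) : principalSubact r a ⊆ principalSubact r b := by
  rintro x ⟨t, hx⟩
  exact ⟨s * t, hr.1.trans hx (by simpa only [mul_assoc] using hr.mul_right h t)⟩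

theorem IsRightCongruence.self_mem_principalSubact (hr : IsRightCongruence r) (a : M) :
    a ∈ principalSubact r a :=
  ⟨1, by simpa only [mul_one] using hr.1.refl a⟩

end RightCongruence

variable {S N : Type*} [Monoid S] [Monoid N] {H ρ : S → S → Prop} {φ : N →ₙ* S}
  {r σ : N → N → Prop}

theorem map_mul_map_one_mul (φ : N →ₙ* S) (n : N) (t : S) : φ n * (φ 1 * t) = φ n * t := by
  rw [← mul_assoc, ← map_mul, mul_one]

/-- `φ` embeds the monoid `N` into `S` as the class of the idempotent `φ 1` under the right
congruence `H`. As `φ 1` need not be `1`, `φ` is only required to be multiplicative. -/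
structure IsClassEmbedding (H : S → S → Prop) (φ : N →ₙ* S) : Prop where
  isRightCongruence : IsRightCongruence H
  injective : Function.Injective φ
  range_eq : range φ = {x | H (φ 1) x}

namespace IsClassEmbedding

variable (h : IsClassEmbedding H φ)
include h

theorem rel_map_one (n : N) : H (φ 1) (φ n) :=
  h.range_eq.subset (mem_range_self n)

theorem mem_range_of_rel {x y : S} (hxy : H x y) (hx : x ∈ range φ) : y ∈ range φ := by
  rw [h.range_eq] at hx ⊢
  exact h.isRightCongruence.1.trans hx hxy

theorem rel_map_one_mul (n : N) (t : S) : H (φ 1 * t) (φ n * t) :=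
  h.isRightCongruence.mul_right (h.rel_map_one n) t

theorem rel_map_one_mul_of_rel {n : N} {u v : S} (huv : H (φ n * u) (φ n * v)) :
    H (φ 1 * u) (φ 1 * v) :=
  have hH := h.isRightCongruence.1
  hH.trans (h.rel_map_one_mul n u) (hH.trans huv (hH.symm (h.rel_map_one_mul n v)))

theorem exists_forall_map_mul_eq {n : N} {t : S} (ht : φ n * t ∈ range φ) :
    ∃ k, ∀ m, φ m * t = φ (m * k) := by
  obtain ⟨k, hk⟩ : φ 1 * t ∈ range φ :=
    h.mem_range_of_rel (h.isRightCongruence.1.symm (h.rel_map_one_mul n t)) ht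
  exact ⟨k, fun m => by rw [map_mul, hk, map_mul_map_one_mul]⟩

end IsClassEmbedding

/-- `ρ` is a right congruence on `S` that is contained in `H` and restricts to the relation `r`
along `φ`. -/
structure IsExtension (H : S → S → Prop) (φ : N →ₙ* S) (r : N → N → Prop) (ρ : S → S → Prop) :
    Prop where
  isRightCongruence : IsRightCongruence ρ
  rel_of_rel : ∀ {x y}, ρ x y → H x y
  map_iff : ∀ {m n}, ρ (φ m) (φ n) ↔ r m n

/-- The largest right congruence on `S` that is contained in `H` and restricts to `σ` along `φ`;
it serves as an upper bound for right congruences given by generators. -/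
def largestExtension (H : S → S → Prop) (φ : N →ₙ* S) (σ : N → N → Prop) (x y : S) : Prop :=
  H x y ∧ ∀ c m n, x * c = φ m → y * c = φ n → σ m n

namespace IsClassEmbedding

theorem isRightCongruence_largestExtension (h : IsClassEmbedding H φ)
    (hσ : IsRightCongruence σ) : IsRightCongruence (largestExtension H φ σ) := by
  have hH := h.isRightCongruence
  refine ⟨⟨fun x => ⟨hH.1.refl x, fun c m n hm hn => ?_⟩, ?_, ?_⟩, ?_⟩
  · rw [h.injective (hm.symm.trans hn)]
    exact hσ.1.refl n
  · exact fun hxy => ⟨hH.1.symm hxy.1, fun c m n hm hn => hσ.1.symm (hxy.2 c n m hn hm)⟩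
  · rintro x y z ⟨hxy, hσxy⟩ ⟨hyz, hσyz⟩
    refine ⟨hH.1.trans hxy hyz, fun c m n hm hn => ?_⟩
    obtain ⟨k, hk⟩ : y * c ∈ range φ := h.mem_range_of_rel (hH.mul_right hxy c) ⟨m, hm.symm⟩
    exact hσ.1.trans (hσxy c m k hm hk.symm) (hσyz c k n hk.symm hn)
  · rintro x y d ⟨hxy, hσxy⟩
    refine ⟨hH.mul_right hxy d, fun c m n hm hn => hσxy (d * c) m n ?_ ?_⟩
    · rw [← mul_assoc, hm]
    · rw [← mul_assoc, hn]

theorem isExtension_largestExtension (h : IsClassEmbedding H φ) (hσ : IsRightCongruence σ) :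
    IsExtension H φ σ (largestExtension H φ σ) where
  isRightCongruence := h.isRightCongruence_largestExtension hσ
  rel_of_rel hxy := hxy.1
  map_iff {m n} := by
    have hH := h.isRightCongruence.1
    refine ⟨fun hmn => hmn.2 1 m n (mul_one _) (mul_one _), fun hmn =>
      ⟨hH.trans (hH.symm (h.rel_map_one m)) (h.rel_map_one n), fun c k l hk hl => ?_⟩⟩
    obtain ⟨t, ht⟩ := h.exists_forall_map_mul_eq ⟨k, hk.symm⟩
    rw [← h.injective ((ht m).symm.trans hk), ← h.injective ((ht n).symm.trans hl)]
    exact hσ.mul_right hmn t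

theorem exists_fg_isExtension (h : IsClassEmbedding H φ) (hr : FGRightCongruence r) :
    ∃ ρ, FGRightCongruence ρ ∧ IsExtension H φ r ρ := by
  obtain ⟨G, hG, hrc, hGr, hrmin⟩ := hr
  obtain ⟨ρ, hρ⟩ := exists_rCongGenBy (Prod.map φ φ '' G)
  have hmax := h.isExtension_largestExtension hrc
  have hρ_le : ∀ x y, ρ x y → largestExtension H φ r x y :=
    hρ.2.2 _ hmax.isRightCongruence (forall_mem_image.2 fun p hp => hmax.map_iff.2 (hGr p hp))
  have hr_le : ∀ m n, r m n → ρ (φ m) (φ n) :=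
    hrmin _ (hρ.1.comap φ) fun p hp => hρ.2.1 _ (mem_image_of_mem _ hp)
  exact ⟨ρ, ⟨_, hG.image _, hρ⟩, hρ.1, fun hxy => (hρ_le _ _ hxy).1,
    fun {m n} => ⟨fun hmn => hmax.map_iff.1 (hρ_le _ _ hmn), hr_le m n⟩⟩

end IsClassEmbedding

/-- Condition (d) of the theorem, for an arbitrary right congruence `H`: the requirement
`e ~R_E u` becomes `e * u = u` together with `u * s ∈ M` for some `s`, which mentions no set of
idempotents. -/
def HasPairFactorization (H : S → S → Prop) (φ : N →ₙ* S) : Prop :=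
  ∀ u v s : S, φ 1 * u = u → u * s ∈ range φ → H u v →
    ∃ p q, u = u * (p * q) ∧ v = v * (p * q) ∧ u * p ∈ range φ ∧ v * p ∈ range φ

/-- A finite set `D` of pairs in `N` that can replace the pair `(u, v)` of elements of `S`: the
image of each lies in the subact `(u, v)S` of `S × S`, and if `uS` meets `φ N`, then some image
generates this subact. If `uS` does not meet `φ N`, then `D` may be empty. -/
structure IsPairCover (φ : N →ₙ* S) (u v : S) (D : Finset (N × N)) : Prop where
  exists_eq_mul : ∀ d ∈ D, ∃ p, φ d.1 = u * p ∧ φ d.2 = v * p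
  exists_mul_eq : ∀ s, u * s ∈ range φ → ∃ d ∈ D, ∃ q, u = φ d.1 * q ∧ v = φ d.2 * q

theorem HasPairFactorization.exists_isPairCover (hd : HasPairFactorization H φ) {u v : S}
    (hu : φ 1 * u = u) (huv : H u v) : ∃ D, IsPairCover φ u v D := by
  by_cases hs : ∃ s, u * s ∈ range φ
  · obtain ⟨s, hs⟩ := hs
    obtain ⟨p, q, hupq, hvpq, ⟨k, hk⟩, ⟨l, hl⟩⟩ := hd u v s hu hs huv
    refine ⟨{(k, l)}, by simpa using ⟨p, hk, hl⟩,
      fun _ _ => ⟨_, Finset.mem_singleton_self _, q, ?_⟩⟩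
    rw [hk, hl, mul_assoc, mul_assoc]
    exact ⟨hupq, hvpq⟩
  · exact ⟨∅, by simp, fun s hus => absurd ⟨s, hus⟩ hs⟩

theorem IsClassEmbedding.largestExtension_of_isPairCover (h : IsClassEmbedding H φ)
    (hσ : IsRightCongruence σ) {u v : S} (huv : H u v) {D : Finset (N × N)}
    (hD : IsPairCover φ u v D) (hDσ : ∀ d ∈ D, σ d.1 d.2) : largestExtension H φ σ u v := by
  refine ⟨huv, fun c m n hm hn => ?_⟩
  obtain ⟨d, hdD, q, rfl, rfl⟩ := hD.exists_mul_eq c ⟨m, hm.symm⟩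
  have hmax := h.isExtension_largestExtension hσ
  exact (hmax.isRightCongruence.mul_right (hmax.map_iff.2 (hDσ d hdD)) q).2 c m n hm hn

namespace IsExtension

theorem isRightCongruence_restriction (hρ : IsExtension H φ r ρ) : IsRightCongruence r := by
  simpa only [hρ.map_iff] using hρ.isRightCongruence.comap φ

theorem preimage_principalSubact_map (hρ : IsExtension H φ r ρ) (h : IsClassEmbedding H φ)
    (a : N) : φ ⁻¹' principalSubact ρ (φ a) = principalSubact r a := by
  ext x
  constructor
  · rintro ⟨s, hs⟩
    obtain ⟨k, hk⟩ := h.exists_forall_map_mul_eq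
      (h.mem_range_of_rel (hρ.rel_of_rel hs) (mem_range_self x))
    exact ⟨k, hρ.map_iff.1 (hk a ▸ hs)⟩
  · rintro ⟨s, hs⟩
    exact ⟨φ s, map_mul φ a s ▸ hρ.map_iff.2 hs⟩

theorem exists_finset_preimage_principalSubact (hρ : IsExtension H φ r ρ)
    (h : IsClassEmbedding H φ) (hd : HasPairFactorization H φ) {a : N} {c : S}
    (hc : c ∈ principalSubact ρ (φ a)) :
    ∃ D : Finset N, φ ⁻¹' principalSubact ρ c = ⋃ d ∈ D, principalSubact r d := by
  classical
  have hρc := hρ.isRightCongruence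
  obtain ⟨s, hcu⟩ := hc
  obtain ⟨D, hD⟩ : ∃ D, IsPairCover φ (φ a * s) (φ a * s) D :=
    hd.exists_isPairCover (by rw [← mul_assoc, ← map_mul, one_mul])
      (h.isRightCongruence.1.refl _)
  refine ⟨D.image Prod.fst, ?_⟩
  ext x
  simp only [Finset.set_biUnion_finset_image, mem_iUnion₂, ← hρ.preimage_principalSubact_map h,
    mem_preimage]
  constructor
  · rintro ⟨t, hxt⟩
    have hxu : ρ (φ x) (φ a * s * t) := hρc.1.trans hxt (hρc.mul_right hcu t)
    obtain ⟨d, hdD, q, hu, -⟩ := hD.exists_mul_eq t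
      (h.mem_range_of_rel (hρ.rel_of_rel hxu) (mem_range_self x))
    exact ⟨d, hdD, q * t, by rwa [← mul_assoc, ← hu]⟩
  · rintro ⟨d, hdD, hx⟩
    obtain ⟨p, hp, -⟩ := hD.exists_eq_mul d hdD
    have hdc : ρ (φ d.1) (c * p) := hp ▸ hρc.mul_right (hρc.1.symm hcu) p
    exact hρc.principalSubact_subset_of_rel hdc hx

theorem exists_finset_inter_principalSubact (hρ : IsExtension H φ r ρ)
    (h : IsClassEmbedding H φ) (hd : HasPairFactorization H φ) {a b : N} {C : Finset S}
    (hC : principalSubact ρ (φ a) ∩ principalSubact ρ (φ b) = ⋃ c ∈ C, principalSubact ρ c) :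
    ∃ D : Finset N, principalSubact r a ∩ principalSubact r b = ⋃ d ∈ D, principalSubact r d := by
  classical
  have hCa : ∀ c ∈ C, c ∈ principalSubact ρ (φ a) := fun c hc =>
    (hC.ge (mem_biUnion hc (hρ.isRightCongruence.self_mem_principalSubact c))).1
  choose! D hD using fun c hc => hρ.exists_finset_preimage_principalSubact h hd (hCa c hc)
  refine ⟨C.biUnion D, ?_⟩
  calc principalSubact r a ∩ principalSubact r b
      = φ ⁻¹' (principalSubact ρ (φ a) ∩ principalSubact ρ (φ b)) := by
        rw [preimage_inter, hρ.preimage_principalSubact_map h, hρ.preimage_principalSubact_map h]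
    _ = ⋃ c ∈ C, φ ⁻¹' principalSubact ρ c := by rw [hC, preimage_iUnion₂]
    _ = ⋃ c ∈ C, ⋃ d ∈ D c, principalSubact r d := iUnion₂_congr hD
    _ = ⋃ d ∈ C.biUnion D, principalSubact r d := (Finset.set_biUnion_biUnion C D _).symm

theorem fgRightCongruence_annihilator (hρ : IsExtension H φ r ρ) (h : IsClassEmbedding H φ)
    (hd : HasPairFactorization H φ) {a : N}
    (hann : FGRightCongruence fun u v => ρ (φ a * u) (φ a * v)) :
    FGRightCongruence fun m n => r (a * m) (a * n) := by
  obtain ⟨K, hK, -, hKρ, hKmin⟩ := hann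
  have hKH : ∀ k ∈ K, H (φ 1 * k.1) (φ 1 * k.2) := fun k hk =>
    h.rel_map_one_mul_of_rel (hρ.rel_of_rel (hKρ k hk))
  choose! D hD using fun k hk =>
    hd.exists_isPairCover (map_mul_map_one_mul φ 1 k.1) (hKH k hk)
  refine ⟨⋃ k ∈ K, (D k : Set (N × N)), hK.biUnion fun k _ => (D k).finite_toSet,
    hρ.isRightCongruence_restriction.comap_mul_left a, fun d hdD => ?_, fun σ hσ hDσ m n hmn => ?_⟩
  · obtain ⟨k, hk, hdk⟩ := mem_iUnion₂.1 hdD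
    obtain ⟨p, hp₁, hp₂⟩ := (hD k hk).exists_eq_mul d hdk
    rw [← hρ.map_iff, map_mul, map_mul, hp₁, hp₂]
    simpa only [mul_assoc, map_mul_map_one_mul] using
      hρ.isRightCongruence.mul_right (hKρ k hk) p
  · have hmax := h.isExtension_largestExtension hσ
    have hKσ : ∀ k ∈ K, largestExtension H φ σ (φ 1 * k.1) (φ 1 * k.2) := fun k hk =>
      h.largestExtension_of_isPairCover hσ (hKH k hk) (hD k hk) fun d hdk =>
        hDσ d (mem_biUnion hk hdk)
    have hσmn : largestExtension H φ σ (φ 1 * φ m) (φ 1 * φ n) :=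
      hKmin _ (hmax.isRightCongruence.comap_mul_left (φ 1)) hKσ _ _
        (by simpa only [map_mul] using hρ.map_iff.2 hmn)
    simpa only [← map_mul, one_mul, hmax.map_iff] using hσmn

end IsExtension

theorem hasPairFactorization_of_forall_mul_eq_self_iff {E : Set S}
    (hrange : ∀ x ∈ range φ, ∀ f ∈ E, (f * φ 1 = φ 1 ↔ f * x = x))
    (hd : ∀ u v : S, (∀ f ∈ E, (f * φ 1 = φ 1 ↔ f * u = u)) → H u v →
      ∃ p q, u = u * (p * q) ∧ v = v * (p * q) ∧ u * p ∈ range φ ∧ v * p ∈ range φ) :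
    HasPairFactorization H φ := fun u v s hu hus =>
  hd u v fun f hf =>
    ⟨fun hfe => by rw [← hu, ← mul_assoc, hfe],
      fun hfu => (hrange _ hus f hf).2 (by rw [← mul_assoc, hfu])⟩

theorem stmt11_general (hS : RightCoherent S) (h : IsClassEmbedding H φ)
    (hd : HasPairFactorization H φ) : RightCoherent N := by
  intro r hr a b
  obtain ⟨ρ, hρfg, hρ⟩ := h.exists_fg_isExtension hr
  obtain ⟨⟨C, hC⟩, hann⟩ := hS ρ hρfg (φ a) (φ b)
  exact ⟨hρ.exists_finset_inter_principalSubact h hd hC,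
    hρ.fgRightCongruence_annihilator h hd hann⟩

end

theorem stmt11 {S : Type*} [Monoid S] (hS : RightCoherent S)
    (M : Set S)
    (hclosed : ∀ a ∈ M, ∀ b ∈ M, a * b ∈ M)
    (e : S) (he : e ∈ M)
    (hel : ∀ a ∈ M, e * a = a) (her : ∀ a ∈ M, a * e = a)
    (E : Set S) (hidem : ∀ f ∈ E, f * f = f)
    (heE : e ∈ E)
    (hHcong : IsRightCongruence (fun u v : S =>
      (∀ f ∈ E, (f * u = u ↔ f * v = v)) ∧ (∀ f ∈ E, (u * f = u ↔ v * f = v))))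
    (hMclass : M = {x : S |
      (∀ f ∈ E, (f * e = e ↔ f * x = x)) ∧ (∀ f ∈ E, (e * f = e ↔ x * f = x))})
    (hd : ∀ u v : S,
      (∀ f ∈ E, (f * e = e ↔ f * u = u)) →
      ((∀ f ∈ E, (f * u = u ↔ f * v = v)) ∧ (∀ f ∈ E, (u * f = u ↔ v * f = v))) →
      ∃ p q : S, u = u * (p * q) ∧ v = v * (p * q) ∧ u * p ∈ M ∧ v * p ∈ M)
    (N : Type*) [Monoid N] (φ : N → S)
    (hinj : Function.Injective φ) (hrange : Set.range φ = M)
    (hmulφ : ∀ x y : N, φ (x * y) = φ x * φ y) (h1φ : φ 1 = e) :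
    RightCoherent N := by
  subst hrange h1φ
  exact stmt11_general (φ := ⟨φ, hmulφ⟩) hS ⟨hHcong, hinj, hMclass⟩
    (hasPairFactorization_of_forall_mul_eq_self_iff (fun _ hx => (hMclass.le hx).1) hd)
end

section
/- Let M be a right coherent monoid and I a non-empty set. Then the Brandt monoid B(M; I)¹ over M is right coherent. -/
/-! Right congruences on a monoid are the congruences of its right act on itself, and right
coherence says that the quotient of this act by a finitely generated congruence is coherent.

Identifying two elements `p`, `q` of a coherent act replaces the subact they generate by a cyclic
act `M / σ`. Coherence makes `σ` finitely generated, so `M / σ` is coherent if `M` is, and the new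
act is again coherent. Hence every quotient of a free right `M`-act by a finitely generated
congruence is coherent.

Every column of the Brandt monoid is a copy of the free right `M`-act on `I` with a zero. On columns
a finitely generated right congruence is a finitely generated congruence on this free act with a
subact collapsed to zero. That subact need not be finitely generated, because a single pair
involving `1` has a nonzero coordinate in every column, but it meets every cyclic subact in a
finitely generated one, because only finitely many basis elements of the free act are linked by the
congruence. -/

open scoped RightActions

section Acts

variable {M X Y : Type*} [Monoid M] [MulAction Mᵐᵒᵖ X] [MulAction Mᵐᵒᵖ Y]

theorem smulCon_ext {ρ σ : SMulCon Mᵐᵒᵖ X} (h : ∀ x y, ρ.r x y ↔ σ.r x y) : ρ = σ := by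
  cases ρ
  cases σ
  congr
  exact Setoid.ext h

/-- The congruence on the right `M`-act `X` generated by a set of pairs. -/
def actConGen (H : Set (X × X)) : SMulCon Mᵐᵒᵖ X where
  toSetoid := Relation.EqvGen.setoid fun x y => ∃ p ∈ H, ∃ m : M, x = p.1 <• m ∧ y = p.2 <• m
  smul m x y h := by
    induction h with
    | rel x y hxy =>
      obtain ⟨p, hp, n, rfl, rfl⟩ := hxy
      exact .rel _ _ ⟨p, hp, n * m.unop, (op_smul_mul ..).symm, (op_smul_mul ..).symm⟩
    | refl x => exact .refl _
    | symm x y _ ih => exact .symm _ _ ih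
    | trans x y z _ _ ih₁ ih₂ => exact .trans _ _ _ ih₁ ih₂

theorem actConGen_of_mem {H : Set (X × X)} {p : X × X} (hp : p ∈ H) :
    (actConGen (M := M) H).r p.1 p.2 :=
  .rel _ _ ⟨p, hp, 1, by simp, by simp⟩

theorem actConGen_le {H : Set (X × X)} {ρ : SMulCon Mᵐᵒᵖ X} (hH : ∀ p ∈ H, ρ.r p.1 p.2) {x y : X}
    (h : (actConGen (M := M) H).r x y) : ρ.r x y := by
  refine Setoid.eqvGen_le (s := ρ.toSetoid) ?_ h
  rintro _ _ ⟨p, hp, m, rfl, rfl⟩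
  exact ρ.smul _ (hH p hp)

theorem actConGen_mono {H K : Set (X × X)} (hHK : H ⊆ K) {x y : X}
    (h : (actConGen (M := M) H).r x y) : (actConGen (M := M) K).r x y :=
  actConGen_le (fun _ hp => actConGen_of_mem (hHK hp)) h

theorem actConGen_empty {x y : X} : (actConGen (M := M) ∅).r x y ↔ x = y := by
  refine ⟨actConGen_le (ρ := ⟨⊥, fun _ _ _ h => congrArg _ h⟩) (by simp), ?_⟩
  rintro rfl
  exact (actConGen ∅).refl' x

/-- Finitely generated congruences on right acts. -/
def IsFG (ρ : SMulCon Mᵐᵒᵖ X) : Prop :=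
  ∃ H : Set (X × X), H.Finite ∧ ρ = actConGen H

/-- The annihilator of the class of `x` in the quotient act `X / ρ`. -/
def ann (ρ : SMulCon Mᵐᵒᵖ X) (x : X) : SMulCon Mᵐᵒᵖ M where
  r u v := ρ.r (x <• u) (x <• v)
  iseqv := ⟨fun _ => ρ.refl' _, ρ.symm', ρ.trans'⟩
  smul m u v h := by
    simp only [MulOpposite.smul_eq_mul_unop, op_smul_mul]
    exact ρ.smul m h

theorem ann_one (ρ : SMulCon Mᵐᵒᵖ M) : ann ρ 1 = ρ :=
  smulCon_ext fun u v => by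
    change ρ.r (1 * u) (1 * v) ↔ ρ.r u v
    rw [one_mul, one_mul]

/-- `C` is a set of common multiples `x c.1 = y c.2` that generates the intersection of the cyclic
subacts of `X / ρ` generated by `x` and `y`. -/
structure IsMeetBasis (ρ : SMulCon Mᵐᵒᵖ X) (x y : X) (C : Set (M × M)) : Prop where
  rel : ∀ c ∈ C, ρ.r (x <• c.1) (y <• c.2)
  exists_rel : ∀ s t : M, ρ.r (x <• s) (y <• t) → ∃ c ∈ C, ∃ w : M, ρ.r (x <• s) (x <• (c.1 * w))

/-- Coherence of the quotient act `X / ρ`: its cyclic subacts have finitely generated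
intersections, and the annihilators of its elements are finitely generated. -/
structure IsCoherent (ρ : SMulCon Mᵐᵒᵖ X) : Prop where
  exists_isMeetBasis : ∀ x y, ∃ C : Set (M × M), C.Finite ∧ IsMeetBasis ρ x y C
  isFG_ann : ∀ x, IsFG (ann ρ x)

namespace IsMeetBasis

variable {ρ : SMulCon Mᵐᵒᵖ X} {x y : X} {C : Set (M × M)}

theorem rel_mul (hC : IsMeetBasis ρ x y C) {c : M × M} (hc : c ∈ C) (w : M) :
    ρ.r (x <• (c.1 * w)) (y <• (c.2 * w)) := by
  simpa only [op_smul_mul] using ρ.smul (.op w) (hC.rel c hc)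

theorem exists_rel_and_rel (hC : IsMeetBasis ρ x y C) {s t : M} (h : ρ.r (x <• s) (y <• t)) :
    ∃ c ∈ C, ∃ w : M, ρ.r (x <• s) (x <• (c.1 * w)) ∧ ρ.r (y <• t) (y <• (c.2 * w)) := by
  obtain ⟨c, hc, w, hw⟩ := hC.exists_rel s t h
  exact ⟨c, hc, w, hw, ρ.trans' (ρ.symm' h) (ρ.trans' hw (hC.rel_mul hc w))⟩

theorem symm (hC : IsMeetBasis ρ x y C) : IsMeetBasis ρ y x (Prod.swap '' C) where
  rel := by
    rintro _ ⟨c, hc, rfl⟩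
    exact ρ.symm' (hC.rel c hc)
  exists_rel s t h := by
    obtain ⟨c, hc, w, -, hw⟩ := hC.exists_rel_and_rel (ρ.symm' h)
    exact ⟨_, ⟨c, hc, rfl⟩, w, hw⟩

theorem transfer (hC : IsMeetBasis ρ x y C) {σ : SMulCon Mᵐᵒᵖ Y} {a b : Y}
    (ha : ∀ u v, (ann ρ x).r u v → (ann σ a).r u v)
    (hb : ∀ u v, (ann ρ y).r u v → (ann σ b).r u v)
    (hab : ∀ c ∈ C, σ.r (a <• c.1) (b <• c.2)) {s t : M} (h : ρ.r (x <• s) (y <• t)) :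
    σ.r (a <• s) (b <• t) := by
  obtain ⟨c, hc, w, hs, ht⟩ := hC.exists_rel_and_rel h
  have hw : σ.r (a <• (c.1 * w)) (b <• (c.2 * w)) := by
    simpa only [op_smul_mul] using σ.smul (.op w) (hab c hc)
  exact σ.trans' (ha _ _ hs) (σ.trans' hw (σ.symm' (hb _ _ ht)))

end IsMeetBasis

/-- The preimage in `X` of the subact of `X / ρ` generated by `K`. -/
def subactGen (ρ : SMulCon Mᵐᵒᵖ X) (K : Set X) : Set X :=
  {x | ∃ c ∈ K, ∃ t : M, ρ.r x (c <• t)}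

theorem subset_subactGen (ρ : SMulCon Mᵐᵒᵖ X) (K : Set X) : K ⊆ subactGen ρ K :=
  fun c hc => ⟨c, hc, 1, by simpa only [MulOpposite.op_one, one_smul] using ρ.refl' c⟩

theorem smul_mem_subactGen {ρ : SMulCon Mᵐᵒᵖ X} {K : Set X} {x : X} (hx : x ∈ subactGen ρ K)
    (m : Mᵐᵒᵖ) : m • x ∈ subactGen ρ K := by
  obtain ⟨c, hc, t, h⟩ := hx
  refine ⟨c, hc, t * m.unop, ?_⟩
  rw [op_smul_mul]
  exact ρ.smul m h

theorem mem_subactGen_of_r {ρ : SMulCon Mᵐᵒᵖ X} {K : Set X} {x y : X} (h : ρ.r x y)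
    (hy : y ∈ subactGen ρ K) : x ∈ subactGen ρ K :=
  hy.imp fun _ => .imp_right <| .imp fun _ => ρ.trans' h

theorem IsCoherent.exists_finite_mem_subactGen {ρ : SMulCon Mᵐᵒᵖ X} (hρ : IsCoherent ρ) {K : Set X}
    {x : X} (hK : {c ∈ K | ∃ s t : M, ρ.r (x <• s) (c <• t)}.Finite) :
    ∃ D : Set M, D.Finite ∧ ∀ u : M, x <• u ∈ subactGen ρ K ↔
      ∃ d ∈ D, ∃ w : M, ρ.r (x <• u) (x <• (d * w)) := by
  choose C hCfin hC using hρ.exists_isMeetBasis x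
  refine ⟨⋃ c ∈ {c ∈ K | ∃ s t : M, ρ.r (x <• s) (c <• t)}, Prod.fst '' C c,
    hK.biUnion fun c _ => (hCfin c).image _, fun u => ⟨?_, ?_⟩⟩
  · rintro ⟨c, hc, t, h⟩
    obtain ⟨e, he, w, hw⟩ := (hC c).exists_rel u t h
    exact ⟨e.1, Set.mem_biUnion ⟨hc, u, t, h⟩ ⟨e, he, rfl⟩, w, hw⟩
  · rintro ⟨d, hd, w, hw⟩
    obtain ⟨c, ⟨hc, -⟩, e, he, rfl⟩ := Set.mem_iUnion₂.1 hd
    exact ⟨c, hc, e.2 * w, ρ.trans' hw ((hC c).rel_mul he w)⟩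

/-- The congruence on `X` with a zero `none` adjoined that extends `ρ` and collapses the
subact generated by `K` to zero; `none` satisfies the conditions `∀ x ∈ o` vacuously. -/
def reesCon (ρ : SMulCon Mᵐᵒᵖ X) (K : Set X) : SMulCon Mᵐᵒᵖ (Option X) where
  r o o' := ((∀ x ∈ o, x ∈ subactGen ρ K) ∧ ∀ y ∈ o', y ∈ subactGen ρ K) ∨
    ∃ x ∈ o, ∃ y ∈ o', ρ.r x y
  iseqv := by
    refine ⟨?_, ?_, ?_⟩
    · rintro (_ | x)
      · exact .inl (by simp)
      · exact .inr ⟨x, rfl, x, rfl, ρ.refl' x⟩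
    · rintro o o' (⟨h, h'⟩ | ⟨x, hx, y, hy, h⟩)
      · exact .inl ⟨h', h⟩
      · exact .inr ⟨y, hy, x, hx, ρ.symm' h⟩
    · rintro _ _ _ (⟨h₁, h₂⟩ | ⟨x, rfl, y, rfl, h⟩) (⟨h₃, h₄⟩ | ⟨x', hx', y', rfl, h'⟩)
      · exact .inl ⟨h₁, h₄⟩
      · have hy' := mem_subactGen_of_r (ρ.symm' h') (h₂ x' hx')
        exact .inl ⟨h₁, fun w hw => Option.mem_some.1 hw ▸ hy'⟩
      · have hx := mem_subactGen_of_r h (h₃ y rfl)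
        exact .inl ⟨fun w hw => Option.mem_some.1 hw ▸ hx, h₄⟩
      · obtain rfl := Option.some_injective _ hx'
        exact .inr ⟨x, rfl, y', rfl, ρ.trans' h h'⟩
  smul m := by
    have smul_mem {o : Option X} (h : ∀ x ∈ o, x ∈ subactGen ρ K) :
        ∀ x ∈ m • o, x ∈ subactGen ρ K := by
      rintro _ hx
      obtain ⟨x, rfl, rfl⟩ := Option.map_eq_some_iff.1 hx
      exact smul_mem_subactGen (h x rfl) m
    rintro _ _ (⟨h, h'⟩ | ⟨x, rfl, y, rfl, h⟩)
    · exact .inl ⟨smul_mem h, smul_mem h'⟩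
    · exact .inr ⟨_, rfl, _, rfl, ρ.smul m h⟩

theorem isMeetBasis_one (ρ : SMulCon Mᵐᵒᵖ M) (b : M) : IsMeetBasis ρ 1 b {(b, 1)} where
  rel := by
    rintro _ rfl
    simp only [op_smul_eq_mul, one_mul, mul_one]
    exact ρ.refl' b
  exists_rel s t h := by
    simp only [op_smul_eq_mul, one_mul] at h ⊢
    exact ⟨_, rfl, t, h⟩

theorem isMeetBasis_zero (ρ : SMulCon Mᵐᵒᵖ M) {z b : M} (hz : ∀ s, z * s = z) (hb : b * z = z) :
    IsMeetBasis ρ z b {(1, z)} where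
  rel := by
    rintro _ rfl
    simp only [op_smul_eq_mul, hz, hb]
    exact ρ.refl' z
  exists_rel s t _ := by
    simp only [op_smul_eq_mul, hz]
    exact ⟨_, rfl, 1, ρ.refl' z⟩

theorem ann_zero (ρ : SMulCon Mᵐᵒᵖ M) {z : M} (hz : ∀ s, z * s = z) :
    ann ρ z = actConGen {(1, z)} := by
  set σ : SMulCon Mᵐᵒᵖ M := actConGen {(1, z)}
  have r_zero (s : M) : σ.r s z := by
    have := σ.smul (.op s) (actConGen_of_mem (p := (1, z)) rfl)
    rwa [op_smul_eq_mul, op_smul_eq_mul, one_mul, hz] at this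
  refine smulCon_ext fun s t => ⟨fun _ => σ.trans' (r_zero s) (σ.symm' (r_zero t)), fun _ => ?_⟩
  change ρ.r (z * s) (z * t)
  rw [hz, hz]

end Acts

section RightCoherent

variable {M : Type*} [Monoid M]

theorem isRightCongruence_r (ρ : SMulCon Mᵐᵒᵖ M) : IsRightCongruence ρ.r :=
  ⟨ρ.iseqv, fun _ _ c h => ρ.smul (.op c) h⟩

/-- Right congruences on `M` are the congruences of `M` as a right act over itself. -/
def IsRightCongruence.toSMulCon {r : M → M → Prop} (hr : IsRightCongruence r) :
    SMulCon Mᵐᵒᵖ M where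
  r := r
  iseqv := hr.1
  smul m u v := hr.2 u v m.unop

theorem rCongGenBy_iff {H : Set (M × M)} {ρ : SMulCon Mᵐᵒᵖ M} :
    RCongGenBy H ρ.r ↔ ρ = actConGen H := by
  constructor
  · rintro ⟨-, hH, hle⟩
    exact smulCon_ext fun x y => ⟨hle _ (isRightCongruence_r _) (fun _ => actConGen_of_mem) x y,
      actConGen_le hH⟩
  · rintro rfl
    exact ⟨isRightCongruence_r _, fun _ => actConGen_of_mem,
      fun r hr hH x y => actConGen_le (ρ := hr.toSMulCon) hH⟩

theorem fgRightCongruence_iff_isFG {ρ : SMulCon Mᵐᵒᵖ M} : FGRightCongruence ρ.r ↔ IsFG ρ :=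
  exists_congr fun _ => and_congr_right fun _ => rCongGenBy_iff

theorem exists_isMeetBasis_iff {ρ : SMulCon Mᵐᵒᵖ M} {a b : M} :
    (∃ C : Set (M × M), C.Finite ∧ IsMeetBasis ρ a b C) ↔
      ∃ C : Finset M, {x : M | (∃ s, ρ.r x (a * s)) ∧ ∃ t, ρ.r x (b * t)} =
        ⋃ c ∈ C, {x : M | ∃ s, ρ.r x (c * s)} := by
  classical
  constructor
  · rintro ⟨C, hCfin, hC⟩
    refine ⟨hCfin.toFinset.image fun c => a * c.1, Set.ext fun x => ?_⟩
    simp only [Set.mem_ofPred_eq, Set.mem_iUnion, Finset.mem_image, Set.Finite.mem_toFinset,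
      exists_prop, exists_exists_and_eq_and, mul_assoc]
    constructor
    · rintro ⟨⟨s, hs⟩, t, ht⟩
      obtain ⟨c, hc, w, hw⟩ := hC.exists_rel s t (ρ.trans' (ρ.symm' hs) ht)
      exact ⟨c, hc, w, ρ.trans' hs hw⟩
    · rintro ⟨c, hc, w, hw⟩
      exact ⟨⟨_, hw⟩, _, ρ.trans' hw (hC.rel_mul hc w)⟩
  · rintro ⟨C, hC⟩
    have mem_iff (x : M) : ((∃ s, ρ.r x (a * s)) ∧ ∃ t, ρ.r x (b * t)) ↔
        ∃ c ∈ C, ∃ w, ρ.r x (c * w) := by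
      simpa using Set.ext_iff.1 hC x
    have exists_pair (c : M) (hc : c ∈ C) : ∃ e : M × M, ρ.r c (a * e.1) ∧ ρ.r c (b * e.2) := by
      obtain ⟨⟨s, hs⟩, t, ht⟩ := (mem_iff c).2 ⟨c, hc, 1, by rw [mul_one]⟩
      exact ⟨(s, t), hs, ht⟩
    choose! e he₁ he₂ using exists_pair
    refine ⟨e '' C, C.finite_toSet.image e, ?_, fun s t h => ?_⟩
    · rintro _ ⟨c, hc, rfl⟩
      exact ρ.trans' (ρ.symm' (he₁ c hc)) (he₂ c hc)
    · obtain ⟨c, hc, w, hw⟩ := (mem_iff (a * s)).1 ⟨⟨s, ρ.refl' _⟩, t, h⟩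
      refine ⟨e c, ⟨c, hc, rfl⟩, w, ρ.trans' hw ?_⟩
      simpa only [op_smul_eq_mul, mul_assoc] using ρ.smul (.op w) (he₁ c hc)

theorem rightCoherent_iff :
    RightCoherent M ↔ ∀ ρ : SMulCon Mᵐᵒᵖ M, IsFG ρ → IsCoherent ρ := by
  constructor
  · intro hM ρ hρ
    have h := hM ρ.r (fgRightCongruence_iff_isFG.2 hρ)
    exact ⟨fun a b => exists_isMeetBasis_iff.2 (h a b).1,
      fun a => fgRightCongruence_iff_isFG.1 (h a a).2⟩
  · rintro hM r hr a b
    obtain ⟨ρ, rfl⟩ : ∃ ρ : SMulCon Mᵐᵒᵖ M, ρ.r = r :=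
      let ⟨_, _, hgen⟩ := hr; ⟨hgen.1.toSMulCon, rfl⟩
    have hρ := hM ρ (fgRightCongruence_iff_isFG.1 hr)
    exact ⟨exists_isMeetBasis_iff.1 (hρ.exists_isMeetBasis a b),
      fgRightCongruence_iff_isFG.2 (hρ.isFG_ann a)⟩

end RightCoherent

section AdjoinPair

variable {M X : Type*} [Monoid M] [MulAction Mᵐᵒᵖ X]

/-- In the quotient act `X / ρ`, the class of `x` is the multiple by `s` of the class of `p` or of
the class of `q`. -/
def PairMultiple (ρ : SMulCon Mᵐᵒᵖ X) (p q x : X) (s : M) : Prop :=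
  ρ.r x (p <• s) ∨ ρ.r x (q <• s)

/-- The annihilator of the common image of `p` and `q` in the quotient of `X / ρ` identifying them,
see `adjoinPair`. -/
def coeffCon (ρ : SMulCon Mᵐᵒᵖ X) (p q : X) : SMulCon Mᵐᵒᵖ M :=
  actConGen {c | ∃ x, PairMultiple ρ p q x c.1 ∧ PairMultiple ρ p q x c.2}

variable {ρ : SMulCon Mᵐᵒᵖ X} {p q x y : X}

namespace PairMultiple

variable {s t : M}

theorem smul (h : PairMultiple ρ p q x s) (m : M) : PairMultiple ρ p q (x <• m) (s * m) := by
  simp only [PairMultiple, op_smul_mul]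
  exact h.imp (ρ.smul (.op m)) (ρ.smul (.op m))

theorem of_rel (hxy : ρ.r x y) (h : PairMultiple ρ p q y s) : PairMultiple ρ p q x s :=
  h.imp (ρ.trans' hxy) (ρ.trans' hxy)

theorem coeffCon_r (hs : PairMultiple ρ p q x s) (ht : PairMultiple ρ p q x t) :
    (coeffCon ρ p q).r s t :=
  actConGen_of_mem (p := (s, t)) ⟨x, hs, ht⟩

end PairMultiple

theorem IsCoherent.isFG_coeffCon (hρ : IsCoherent ρ) (p q : X) : IsFG (coeffCon ρ p q) := by
  obtain ⟨A, hAfin, hA⟩ := hρ.isFG_ann p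
  obtain ⟨B, hBfin, hB⟩ := hρ.isFG_ann q
  obtain ⟨C, hCfin, hC⟩ := hρ.exists_isMeetBasis p q
  set σ : SMulCon Mᵐᵒᵖ M := actConGen (A ∪ B ∪ C)
  have ann_p (u v : M) (h : (ann ρ p).r u v) : σ.r u v :=
    actConGen_mono (fun _ hc => .inl (.inl hc)) (hA ▸ h)
  have ann_q (u v : M) (h : (ann ρ q).r u v) : σ.r u v :=
    actConGen_mono (fun _ hc => .inl (.inr hc)) (hB ▸ h)
  have meet (u v : M) (h : ρ.r (p <• u) (q <• v)) : σ.r u v := by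
    have hC' (c : M × M) (hc : c ∈ C) : σ.r (1 <• c.1) (1 <• c.2) := by
      simpa only [op_smul_eq_mul, one_mul] using actConGen_of_mem (M := M) (.inr hc)
    simpa only [op_smul_eq_mul, one_mul] using
      hC.transfer (by rwa [ann_one]) (by rwa [ann_one]) hC' h
  refine ⟨A ∪ B ∪ C, (hAfin.union hBfin).union hCfin, smulCon_ext fun u v =>
    ⟨actConGen_le ?_, actConGen_le ?_⟩⟩
  · rintro ⟨s, t⟩ ⟨x, hs | hs, ht | ht⟩
    · exact ann_p s t (ρ.trans' (ρ.symm' hs) ht)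
    · exact meet s t (ρ.trans' (ρ.symm' hs) ht)
    · exact σ.symm' (meet t s (ρ.trans' (ρ.symm' ht) hs))
    · exact ann_q s t (ρ.trans' (ρ.symm' hs) ht)
  · rintro ⟨s, t⟩ ((hc | hc) | hc)
    · have h : (ann ρ p).r s t := hA ▸ actConGen_of_mem hc
      exact PairMultiple.coeffCon_r (.inl (ρ.refl' _)) (.inl h)
    · have h : (ann ρ q).r s t := hB ▸ actConGen_of_mem hc
      exact PairMultiple.coeffCon_r (.inr (ρ.refl' _)) (.inr h)
    · exact PairMultiple.coeffCon_r (.inl (ρ.refl' _)) (.inr (hC.rel _ hc))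

/-- The least congruence containing `ρ` and the pair `(p, q)`, see `adjoinPair_actConGen`. In
`X / ρ` it replaces the subact generated by `p` and `q` by the cyclic act `M / coeffCon ρ p q`. -/
def adjoinPair (ρ : SMulCon Mᵐᵒᵖ X) (p q : X) : SMulCon Mᵐᵒᵖ X where
  r x y := ρ.r x y ∨
    ∃ s t, PairMultiple ρ p q x s ∧ PairMultiple ρ p q y t ∧ (coeffCon ρ p q).r s t
  iseqv := by
    refine ⟨fun x => .inl (ρ.refl' x), ?_, ?_⟩
    · rintro x y (h | ⟨s, t, hs, ht, h⟩)
      · exact .inl (ρ.symm' h)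
      · exact .inr ⟨t, s, ht, hs, Setoid.symm' _ h⟩
    · rintro x y w (hxy | ⟨s, t, hs, ht, hst⟩) (hyw | ⟨s', t', hs', ht', hst'⟩)
      · exact .inl (ρ.trans' hxy hyw)
      · exact .inr ⟨s', t', hs'.of_rel hxy, ht', hst'⟩
      · exact .inr ⟨s, t, hs, ht.of_rel (ρ.symm' hyw), hst⟩
      · exact .inr ⟨s, t', hs, ht',
          Setoid.trans' _ hst (Setoid.trans' _ (ht.coeffCon_r hs') hst')⟩
  smul m x y := by
    rintro (h | ⟨s, t, hs, ht, h⟩)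
    · exact .inl (ρ.smul m h)
    · exact .inr ⟨_, _, hs.smul m.unop, ht.smul m.unop, (coeffCon ρ p q).smul m h⟩

theorem adjoinPair_actConGen (H : Set (X × X)) (p q : X) :
    adjoinPair (actConGen (M := M) H) p q = actConGen (insert (p, q) H) := by
  set τ : SMulCon Mᵐᵒᵖ X := actConGen (insert (p, q) H)
  have le {x y : X} (h : (actConGen H).r x y) : τ.r x y := actConGen_mono (Set.subset_insert _ _) h
  have multiple {x : X} {s : M} (h : PairMultiple (actConGen H) p q x s) : τ.r x (p <• s) := by
    have hpq : τ.r p q := actConGen_of_mem (Set.mem_insert (p, q) H)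
    exact h.elim le fun h => τ.trans' (le h) (τ.smul (.op s) (τ.symm' hpq))
  refine smulCon_ext fun x y => ⟨?_, actConGen_le ?_⟩
  · rintro (h | ⟨s, t, hs, ht, hst⟩)
    · exact le h
    · have hann : (ann τ p).r s t := by
        refine actConGen_le ?_ hst
        rintro c ⟨w, hw₁, hw₂⟩
        exact τ.trans' (τ.symm' (multiple hw₁)) (multiple hw₂)
      exact τ.trans' (multiple hs) (τ.trans' hann (τ.symm' (multiple ht)))
  · rintro c (rfl | hc)
    · refine .inr ⟨1, 1, .inl ?_, .inr ?_, Setoid.refl' _ 1⟩ <;>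
        simpa only [MulOpposite.op_one, one_smul] using Setoid.refl' _ _
    · exact .inl (actConGen_of_mem hc)

/-- The multiples `x k.1 = p k.2` or `x k.1 = q k.2`, for `k ∈ K`, generate the intersection of the
subacts of `X / ρ` generated by `x` and by `{p, q}`. -/
structure IsPairMultipleBasis (ρ : SMulCon Mᵐᵒᵖ X) (p q x : X) (K : Set (M × M)) : Prop where
  pairMultiple : ∀ k ∈ K, PairMultiple ρ p q (x <• k.1) k.2
  exists_rel : ∀ u s : M, PairMultiple ρ p q (x <• u) s →
    ∃ k ∈ K, ∃ w : M, ρ.r (x <• u) (x <• (k.1 * w))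

theorem IsCoherent.exists_isPairMultipleBasis (hρ : IsCoherent ρ) (p q x : X) :
    ∃ K : Set (M × M), K.Finite ∧ IsPairMultipleBasis ρ p q x K := by
  obtain ⟨C, hCfin, hC⟩ := hρ.exists_isMeetBasis x p
  obtain ⟨D, hDfin, hD⟩ := hρ.exists_isMeetBasis x q
  refine ⟨C ∪ D, hCfin.union hDfin, ?_, ?_⟩
  · rintro k (hk | hk)
    · exact .inl (hC.rel k hk)
    · exact .inr (hD.rel k hk)
  · rintro u s (h | h)
    · obtain ⟨k, hk, w, hw⟩ := hC.exists_rel u s h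
      exact ⟨k, .inl hk, w, hw⟩
    · obtain ⟨k, hk, w, hw⟩ := hD.exists_rel u s h
      exact ⟨k, .inr hk, w, hw⟩

namespace IsPairMultipleBasis

variable {K L : Set (M × M)}

theorem pairMultiple_mul (hK : IsPairMultipleBasis ρ p q x K) {k : M × M} (hk : k ∈ K) (w : M) :
    PairMultiple ρ p q (x <• (k.1 * w)) (k.2 * w) := by
  simpa only [op_smul_mul] using (hK.pairMultiple k hk).smul w

theorem exists_rel_and_coeffCon_r (hK : IsPairMultipleBasis ρ p q x K) {u s : M}
    (h : PairMultiple ρ p q (x <• u) s) :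
    ∃ k ∈ K, ∃ w : M, ρ.r (x <• u) (x <• (k.1 * w)) ∧ (coeffCon ρ p q).r s (k.2 * w) := by
  obtain ⟨k, hk, w, hw⟩ := hK.exists_rel u s h
  exact ⟨k, hk, w, hw, h.coeffCon_r ((hK.pairMultiple_mul hk w).of_rel hw)⟩

theorem adjoinPair_r (hK : IsPairMultipleBasis ρ p q x K) (hL : IsPairMultipleBasis ρ p q y L)
    {k l : M × M} (hk : k ∈ K) (hl : l ∈ L) {u v : M}
    (h : (coeffCon ρ p q).r (k.2 * u) (l.2 * v)) :
    (adjoinPair ρ p q).r (x <• (k.1 * u)) (y <• (l.1 * v)) :=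
  .inr ⟨_, _, hK.pairMultiple_mul hk u, hL.pairMultiple_mul hl v, h⟩

theorem exists_of_adjoinPair_r (hK : IsPairMultipleBasis ρ p q x K)
    (hL : IsPairMultipleBasis ρ p q y L) {s t : M}
    (h : (adjoinPair ρ p q).r (x <• s) (y <• t)) :
    ρ.r (x <• s) (y <• t) ∨ ∃ k ∈ K, ∃ l ∈ L, ∃ u v : M, ρ.r (x <• s) (x <• (k.1 * u)) ∧
      ρ.r (y <• t) (y <• (l.1 * v)) ∧ (coeffCon ρ p q).r (k.2 * u) (l.2 * v) := by
  refine h.imp_right ?_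
  rintro ⟨s', t', hs, ht, hst⟩
  obtain ⟨k, hk, u, hu, hu'⟩ := hK.exists_rel_and_coeffCon_r hs
  obtain ⟨l, hl, v, hv, hv'⟩ := hL.exists_rel_and_coeffCon_r ht
  exact ⟨k, hk, l, hl, u, v, hu, hv,
    Setoid.trans' _ (Setoid.symm' _ hu') (Setoid.trans' _ hst hv')⟩

variable {C : Set (M × M)} {D : M × M → M × M → Set (M × M)}

theorem isMeetBasis_adjoinPair (hK : IsPairMultipleBasis ρ p q x K)
    (hL : IsPairMultipleBasis ρ p q y L) (hC : IsMeetBasis ρ x y C)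
    (hD : ∀ k l, IsMeetBasis (coeffCon ρ p q) k.2 l.2 (D k l)) :
    IsMeetBasis (adjoinPair ρ p q) x y
      (C ∪ ⋃ k ∈ K, ⋃ l ∈ L, Prod.map (k.1 * ·) (l.1 * ·) '' D k l) where
  rel := by
    rintro c (hc | hc)
    · exact .inl (hC.rel c hc)
    · simp only [Set.mem_iUnion] at hc
      obtain ⟨k, hk, l, hl, d, hd, rfl⟩ := hc
      exact hK.adjoinPair_r hL hk hl ((hD k l).rel d hd)
  exists_rel s t h := by
    obtain h | ⟨k, hk, l, hl, u, v, hu, -, huv⟩ := hK.exists_of_adjoinPair_r hL h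
    · obtain ⟨c, hc, w, hw⟩ := hC.exists_rel s t h
      exact ⟨c, .inl hc, w, .inl hw⟩
    · obtain ⟨d, hd, w, hw⟩ := (hD k l).exists_rel u v huv
      refine ⟨_, .inr (Set.mem_biUnion hk (Set.mem_biUnion hl ⟨d, hd, rfl⟩)), w, ?_⟩
      simp only [Prod.map_fst, mul_assoc]
      exact Setoid.trans' _ (.inl hu) (hK.adjoinPair_r hK hk hk hw)

theorem ann_adjoinPair {A : Set (M × M)} {E : M × M → Set (M × M)}
    (hK : IsPairMultipleBasis ρ p q x K) (hA : ann ρ x = actConGen A)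
    (hD : ∀ k l, IsMeetBasis (coeffCon ρ p q) k.2 l.2 (D k l))
    (hE : ∀ k, ann (coeffCon ρ p q) k.2 = actConGen (E k)) :
    ann (adjoinPair ρ p q) x = actConGen
      (A ∪ ((⋃ k ∈ K, Prod.map (k.1 * ·) (k.1 * ·) '' E k) ∪
        ⋃ k ∈ K, ⋃ l ∈ K, Prod.map (k.1 * ·) (l.1 * ·) '' D k l)) := by
  set G := A ∪ ((⋃ k ∈ K, Prod.map (k.1 * ·) (k.1 * ·) '' E k) ∪
    ⋃ k ∈ K, ⋃ l ∈ K, Prod.map (k.1 * ·) (l.1 * ·) '' D k l)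
  set θ : SMulCon Mᵐᵒᵖ M := actConGen G
  have of_ann {u v : M} (h : (ann ρ x).r u v) : θ.r u v :=
    actConGen_mono (fun _ hc => .inl hc) (hA ▸ h)
  have of_ann_coeffCon {k : M × M} (hk : k ∈ K) (u v : M)
      (h : (ann (coeffCon ρ p q) k.2).r u v) : (ann θ k.1).r u v := by
    rw [hE] at h
    exact actConGen_le (ρ := ann θ k.1) (fun e he =>
      actConGen_of_mem (p := Prod.map (k.1 * ·) (k.1 * ·) e)
        (.inr (.inl (Set.mem_biUnion hk ⟨e, he, rfl⟩)))) h
  refine smulCon_ext fun u v => ⟨fun h => ?_, actConGen_le ?_⟩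
  · obtain h | ⟨k, hk, l, hl, s, t, hs, ht, hst⟩ := hK.exists_of_adjoinPair_r hK h
    · exact of_ann h
    · have hθ : θ.r (k.1 * s) (l.1 * t) :=
        (hD k l).transfer (of_ann_coeffCon hk) (of_ann_coeffCon hl) (fun d hd =>
          actConGen_of_mem (p := Prod.map (k.1 * ·) (l.1 * ·) d)
            (.inr (.inr (Set.mem_biUnion hk (Set.mem_biUnion hl ⟨d, hd, rfl⟩))))) hst
      exact θ.trans' (of_ann hs) (θ.trans' hθ (θ.symm' (of_ann ht)))
  · rintro c (hc | hc | hc)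
    · have hc : (ann ρ x).r c.1 c.2 := hA ▸ actConGen_of_mem hc
      exact .inl hc
    · simp only [Set.mem_iUnion] at hc
      obtain ⟨k, hk, e, he, rfl⟩ := hc
      have he : (ann (coeffCon ρ p q) k.2).r e.1 e.2 := hE k ▸ actConGen_of_mem he
      exact hK.adjoinPair_r hK hk hk he
    · simp only [Set.mem_iUnion] at hc
      obtain ⟨k, hk, l, hl, d, hd, rfl⟩ := hc
      exact hK.adjoinPair_r hK hk hl ((hD k l).rel d hd)

end IsPairMultipleBasis

theorem IsCoherent.adjoinPair (hM : RightCoherent M) (hρ : IsCoherent ρ) (p q : X) :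
    IsCoherent (adjoinPair ρ p q) := by
  have hσ := rightCoherent_iff.1 hM _ (hρ.isFG_coeffCon p q)
  choose K hKfin hK using hρ.exists_isPairMultipleBasis p q
  choose D hDfin hD using fun k l : M × M => hσ.exists_isMeetBasis k.2 l.2
  choose E hEfin hE using fun k : M × M => hσ.isFG_ann k.2
  have finite_biUnion (x y : X) :
      (⋃ k ∈ K x, ⋃ l ∈ K y, Prod.map (k.1 * ·) (l.1 * ·) '' D k l).Finite :=
    (hKfin x).biUnion fun k _ => (hKfin y).biUnion fun l _ => (hDfin k l).image _
  constructor
  · intro x y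
    obtain ⟨C, hCfin, hC⟩ := hρ.exists_isMeetBasis x y
    exact ⟨_, hCfin.union (finite_biUnion x y), (hK x).isMeetBasis_adjoinPair (hK y) hC hD⟩
  · intro x
    obtain ⟨A, hAfin, hA⟩ := hρ.isFG_ann x
    exact ⟨_, hAfin.union (((hKfin x).biUnion fun k _ => (hEfin k).image _).union
      (finite_biUnion x x)), (hK x).ann_adjoinPair hA hD hE⟩

end AdjoinPair

section FreeAct

variable {M I : Type*} [Monoid M]

theorem isCoherent_actConGen_empty (hM : RightCoherent M) :
    IsCoherent (actConGen ∅ : SMulCon Mᵐᵒᵖ (Σ _ : I, M)) := by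
  have hcoh := rightCoherent_iff.1 hM (actConGen ∅) ⟨∅, Set.finite_empty, rfl⟩
  have rel_iff (i : I) (a b : M) : (actConGen (M := M) (∅ : Set ((Σ _ : I, M) × Σ _ : I, M))).r
      ⟨i, a⟩ ⟨i, b⟩ ↔ (actConGen (M := M) ∅).r a b := by
    simp [actConGen_empty]
  constructor
  · rintro ⟨i, a⟩ ⟨j, b⟩
    by_cases hij : i = j
    · subst hij
      obtain ⟨C, hCfin, hC⟩ := hcoh.exists_isMeetBasis a b
      exact ⟨C, hCfin, fun c hc => (rel_iff ..).2 (hC.rel c hc), fun s t h =>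
        (hC.exists_rel s t ((rel_iff ..).1 h)).imp fun c => .imp_right <| .imp fun w =>
          (rel_iff ..).2⟩
    · refine ⟨∅, Set.finite_empty, by simp, fun s t h => ?_⟩
      exact absurd (congrArg Sigma.fst (actConGen_empty.1 h)) hij
  · rintro ⟨i, a⟩
    have hann : ann (actConGen (M := M) ∅) (⟨i, a⟩ : Σ _ : I, M) = ann (actConGen ∅) a :=
      smulCon_ext fun u v => rel_iff i (a <• u) (a <• v)
    exact hann ▸ hcoh.isFG_ann a

theorem IsFG.isCoherent (hM : RightCoherent M) {ρ : SMulCon Mᵐᵒᵖ (Σ _ : I, M)} (hρ : IsFG ρ) :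
    IsCoherent ρ := by
  obtain ⟨H, hH, rfl⟩ := hρ
  induction H, hH using Set.Finite.induction_on with
  | empty => exact isCoherent_actConGen_empty hM
  | @insert p H _ _ ih => exact adjoinPair_actConGen (M := M) H p.1 p.2 ▸ ih.adjoinPair hM p.1 p.2

theorem IsFG.exists_finite_fst {ρ : SMulCon Mᵐᵒᵖ (Σ _ : I, M)} (hρ : IsFG ρ) :
    ∃ T : Set I, T.Finite ∧ ∀ x y, ρ.r x y → x.1 = y.1 ∨ x.1 ∈ T ∧ y.1 ∈ T := by
  obtain ⟨H, hH, rfl⟩ := hρ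
  set T : Set I := (fun p => p.1.1) '' H ∪ (fun p => p.2.1) '' H
  refine ⟨T, (hH.image _).union (hH.image _), fun x y => ?_⟩
  let θ : SMulCon Mᵐᵒᵖ (Σ _ : I, M) :=
    { r x y := x.1 = y.1 ∨ x.1 ∈ T ∧ y.1 ∈ T
      iseqv := ⟨by grind, by grind, by grind⟩
      smul _ _ _ h := h }
  exact actConGen_le (ρ := θ) fun p hp => .inr ⟨.inl ⟨p, hp, rfl⟩, .inr ⟨p, hp, rfl⟩⟩

end FreeAct

/-- `S` is the Brandt monoid over `M` with index set `I`, where `z` is the zero and `f (i, a, j)`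
is the nonzero element with coordinates `i`, `a`, `j`. The identity of `S` may be one of these. -/
structure IsBrandtMonoid {M I S : Type*} [Monoid M] [Monoid S] (f : I × M × I → S) (z : S) :
    Prop where
  injective : Function.Injective f
  ne_zero : ∀ p, f p ≠ z
  eq_one_or_eq_zero_or_exists : ∀ s, s = 1 ∨ s = z ∨ ∃ p, f p = s
  mul_eq : ∀ i a j b l, f (i, a, j) * f (j, b, l) = f (i, a * b, l)
  mul_ne : ∀ i a j k b l, j ≠ k → f (i, a, j) * f (k, b, l) = z
  zero_mul : ∀ s, z * s = z
  mul_zero : ∀ s, s * z = z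

section Brandt

variable {M I S : Type*} [Monoid M] [Monoid S] {f : I × M × I → S} {z : S}

/-- The `j`-th column of a Brandt monoid, as the image of the free right act on `I` with a zero
`none` adjoined. -/
def column (f : I × M × I → S) (z : S) (j : I) : Option (Σ _ : I, M) → S
  | none => z
  | some x => f (x.1, x.2, j)

/-- The element `s f (j, 1, j)` of the `j`-th column, transported to the free right act with zero
along `column`. -/
noncomputable def coord (f : I × M × I → S) (z : S) (s : S) (j : I) : Option (Σ _ : I, M) :=
  Function.invFun (column f z j) (s * f (j, 1, j))

namespace IsBrandtMonoid

variable {j k l : I} {o o' : Option (Σ _ : I, M)} {x y : Σ _ : I, M} {s : S}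

theorem column_injective (hS : IsBrandtMonoid f z) (j : I) :
    Function.Injective (column f z j) := by
  rintro (_ | ⟨i, a⟩) (_ | ⟨k, b⟩) h
  · rfl
  · exact absurd h.symm (hS.ne_zero _)
  · exact absurd h (hS.ne_zero _)
  · have := hS.injective h
    simp_all only [Prod.mk.injEq, and_true]

theorem column_mul (hS : IsBrandtMonoid f z) (j : I) (o : Option (Σ _ : I, M)) (m : M) (l : I) :
    column f z j o * f (j, m, l) = column f z l (o <• m) := by
  cases o with
  | none => exact hS.zero_mul _
  | some x => exact hS.mul_eq ..

theorem column_mul_ne (hS : IsBrandtMonoid f z) (h : j ≠ k) (o : Option (Σ _ : I, M)) (m : M)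
    (l : I) : column f z j o * f (k, m, l) = z := by
  cases o with
  | none => exact hS.zero_mul _
  | some x => exact hS.mul_ne _ _ _ _ _ _ h

theorem exists_eq_column (hS : IsBrandtMonoid f z) (s : S) :
    s = 1 ∨ s = z ∨ ∃ j x, s = column f z j (some x) := by
  obtain h | h | ⟨⟨i, a, j⟩, rfl⟩ := hS.eq_one_or_eq_zero_or_exists s
  · exact .inl h
  · exact .inr (.inl h)
  · exact .inr (.inr ⟨j, ⟨i, a⟩, rfl⟩)

theorem column_mul_cases (hS : IsBrandtMonoid f z) (j : I) (s : S) :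
    (∀ o, column f z j o * s = z) ∨
      ∃ (m : M) (l : I), ∀ o, column f z j o * s = column f z l (o <• m) := by
  obtain rfl | rfl | ⟨⟨i, m, l⟩, rfl⟩ := hS.eq_one_or_eq_zero_or_exists s
  · exact .inr ⟨1, j, by simp⟩
  · exact .inl fun o => hS.mul_zero _
  · by_cases h : j = i
    · subst h
      exact .inr ⟨m, l, fun o => hS.column_mul j o m l⟩
    · exact .inl fun o => hS.column_mul_ne h o m l

theorem column_coord (hS : IsBrandtMonoid f z) (s : S) (j : I) :
    column f z j (coord f z s j) = s * f (j, 1, j) := by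
  refine Function.invFun_eq ?_
  obtain rfl | rfl | ⟨k, x, rfl⟩ := hS.exists_eq_column s
  · exact ⟨some ⟨j, 1⟩, (one_mul _).symm⟩
  · exact ⟨none, (hS.zero_mul _).symm⟩
  · by_cases h : k = j
    · subst h
      exact ⟨_, (hS.column_mul k (some x) 1 k).symm⟩
    · exact ⟨none, (hS.column_mul_ne h _ _ _).symm⟩

theorem coord_column_self (hS : IsBrandtMonoid f z) (j : I) (o : Option (Σ _ : I, M)) :
    coord f z (column f z j o) j = o := by
  apply hS.column_injective j
  rw [hS.column_coord, hS.column_mul, MulOpposite.op_one, one_smul]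

theorem coord_zero (hS : IsBrandtMonoid f z) (j : I) : coord f z z j = none :=
  hS.coord_column_self j none

theorem coord_column_ne (hS : IsBrandtMonoid f z) (h : j ≠ k) (o : Option (Σ _ : I, M)) :
    coord f z (column f z j o) k = none := by
  apply hS.column_injective k
  rw [hS.column_coord, hS.column_mul_ne h, column]

theorem coord_mul (hS : IsBrandtMonoid f z) (s c : S) (j : I) :
    coord f z (s * c) j = (coord f z c j).elim none fun x => coord f z s x.1 <• x.2 := by
  apply hS.column_injective j
  rw [hS.column_coord, mul_assoc, ← hS.column_coord c]
  cases coord f z c j with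
  | none => exact hS.mul_zero s
  | some x =>
    calc s * f (x.1, x.2, j)
      _ = s * f (x.1, 1, x.1) * f (x.1, x.2, j) := by rw [mul_assoc, hS.mul_eq, one_mul]
      _ = column f z j (coord f z s x.1 <• x.2) := by rw [← hS.column_coord, hS.column_mul]

theorem eq_one_or_eq_column_of_coord (hS : IsBrandtMonoid f z) (h : coord f z s j = some x) :
    s = 1 ∧ x = ⟨j, 1⟩ ∨ s = column f z j (some x) := by
  have hx := hS.column_coord s j
  obtain rfl | rfl | ⟨k, y, rfl⟩ := hS.exists_eq_column s
  · refine .inl ⟨rfl, Option.some_injective _ (hS.column_injective j ?_)⟩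
    rw [← h, hx, one_mul, column]
  · rw [hS.zero_mul, h] at hx
    exact absurd hx (hS.ne_zero _)
  · by_cases hkj : k = j
    · subst hkj
      rw [← h, hS.coord_column_self]
      exact .inr rfl
    · rw [hS.coord_column_ne hkj] at h
      cases h

theorem finite_setOf_eq_column (hS : IsBrandtMonoid f z) (s : S) :
    {j | ∃ x, s = column f z j (some x)}.Finite := by
  refine Set.Subsingleton.finite ?_
  rintro j ⟨x, rfl⟩ k ⟨y, h⟩
  exact congrArg (fun p => p.2.2) (hS.injective h)

/-- Congruence of coordinates, for a congruence on the free right act with zero. -/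
def coordCon (hS : IsBrandtMonoid f z) (Θ : SMulCon Mᵐᵒᵖ (Option (Σ _ : I, M))) :
    SMulCon Sᵐᵒᵖ S where
  r s t := ∀ j, Θ.r (coord f z s j) (coord f z t j)
  iseqv := ⟨fun _ _ => Θ.refl' _, fun h j => Θ.symm' (h j), fun h h' j => Θ.trans' (h j) (h' j)⟩
  smul c s t h j := by
    simp only [MulOpposite.smul_eq_mul_unop, hS.coord_mul]
    cases coord f z c.unop j with
    | none => exact Θ.refl' none
    | some x => exact Θ.smul _ (h x.1)

variable {ρ : SMulCon Sᵐᵒᵖ S}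

theorem r_column_smul (hS : IsBrandtMonoid f z)
    (h : ρ.r (column f z j o) (column f z j o')) (m : M) (l : I) :
    ρ.r (column f z l (o <• m)) (column f z l (o' <• m)) := by
  simpa only [op_smul_eq_mul, hS.column_mul] using ρ.smul (.op (f (j, m, l))) h

theorem r_column_congr (hS : IsBrandtMonoid f z) :
    ρ.r (column f z j o) (column f z j o') ↔ ρ.r (column f z l o) (column f z l o') := by
  constructor <;> intro h <;>
    simpa only [MulOpposite.op_one, one_smul] using hS.r_column_smul h 1 _

/-- The restriction of a right congruence to the nonzero elements of a column; which column is
irrelevant by `columnCon_r_iff`. -/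
def columnCon (hS : IsBrandtMonoid f z) (ρ : SMulCon Sᵐᵒᵖ S) : SMulCon Mᵐᵒᵖ (Σ _ : I, M) where
  r x y := ∀ j, ρ.r (column f z j (some x)) (column f z j (some y))
  iseqv := ⟨fun _ _ => ρ.refl' _, fun h j => ρ.symm' (h j), fun h h' j => ρ.trans' (h j) (h' j)⟩
  smul m _ _ h j := hS.r_column_smul (h j) m.unop j

theorem columnCon_r_iff (hS : IsBrandtMonoid f z) (j : I) :
    (hS.columnCon ρ).r x y ↔ ρ.r (column f z j (some x)) (column f z j (some y)) :=
  ⟨fun h => h j, fun h _ => hS.r_column_congr.1 h⟩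

end IsBrandtMonoid

/-- The pairs of distinct nonzero coordinates of pairs in `H`. -/
def coordPairs (f : I × M × I → S) (z : S) (H : Set (S × S)) :
    Set ((Σ _ : I, M) × Σ _ : I, M) :=
  {c | c.1 ≠ c.2 ∧ ∃ p ∈ H, ∃ j, coord f z p.1 j = some c.1 ∧ coord f z p.2 j = some c.2}

/-- The nonzero coordinates of pairs in `H` that the right congruence generated by `H` identifies
with zero. -/
def coordZeros (f : I × M × I → S) (z : S) (H : Set (S × S)) : Set (Σ _ : I, M) :=
  {x | ∃ p ∈ H, ∃ j, (coord f z p.1 j = some x ∨ coord f z p.2 j = some x) ∧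
    (actConGen (M := S) H).r (column f z j (some x)) z}

namespace IsBrandtMonoid

variable {H : Set (S × S)} {x y : Σ _ : I, M}

theorem finite_coordPairs (hS : IsBrandtMonoid f z) (hH : H.Finite) :
    (coordPairs f z H).Finite := by
  have hfin : (⋃ p ∈ H, (fun j => (coord f z p.1 j, coord f z p.2 j)) ''
      ({j | ∃ x, p.1 = column f z j (some x)} ∪ {j | ∃ x, p.2 = column f z j (some x)})).Finite :=
    hH.biUnion fun p _ =>
      ((hS.finite_setOf_eq_column p.1).union (hS.finite_setOf_eq_column p.2)).image _
  have hsome := (Option.some_injective (Σ _ : I, M)).prodMap (Option.some_injective (Σ _ : I, M))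
  refine (hfin.preimage hsome.injOn).subset ?_
  rintro ⟨x, y⟩ ⟨hxy, p, hp, j, hx, hy⟩
  refine Set.mem_biUnion hp ⟨j, ?_, Prod.ext hx hy⟩
  obtain ⟨-, rfl⟩ | hx' := hS.eq_one_or_eq_column_of_coord hx
  · obtain ⟨-, rfl⟩ | hy' := hS.eq_one_or_eq_column_of_coord hy
    · exact absurd rfl hxy
    · exact .inr ⟨y, hy'⟩
  · exact .inl ⟨x, hx'⟩

theorem finite_setOf_coord (hS : IsBrandtMonoid f z) (s : S) {T : Set I} (hT : T.Finite) :
    {x | x.1 ∈ T ∧ ∃ j, coord f z s j = some x}.Finite := by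
  have hfin := (hT.union (hS.finite_setOf_eq_column s)).image (coord f z s)
  refine (hfin.preimage (Option.some_injective _).injOn).subset ?_
  rintro x ⟨hxT, j, hx⟩
  refine ⟨j, ?_, hx⟩
  obtain ⟨-, rfl⟩ | h := hS.eq_one_or_eq_column_of_coord hx
  · exact .inl hxT
  · exact .inr ⟨x, h⟩

theorem finite_setOf_coordZeros (hS : IsBrandtMonoid f z) (hH : H.Finite) {T : Set I}
    (hT : T.Finite) : {x ∈ coordZeros f z H | x.1 ∈ T}.Finite := by
  refine (hH.biUnion fun p _ =>
    (hS.finite_setOf_coord p.1 hT).union (hS.finite_setOf_coord p.2 hT)).subset ?_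
  rintro x ⟨⟨p, hp, j, hx | hx, -⟩, hxT⟩
  · exact Set.mem_biUnion hp (.inl ⟨hxT, j, hx⟩)
  · exact Set.mem_biUnion hp (.inr ⟨hxT, j, hx⟩)

theorem r_column_coord (hS : IsBrandtMonoid f z) {p : S × S} (hp : p ∈ H) (j : I) :
    (actConGen (M := S) H).r (column f z j (coord f z p.1 j)) (column f z j (coord f z p.2 j)) := by
  rw [hS.column_coord, hS.column_coord]
  exact (actConGen H).smul (.op (f (j, 1, j))) (actConGen_of_mem hp)

theorem r_column_of_actConGen_coordPairs (hS : IsBrandtMonoid f z)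
    (h : (actConGen (M := M) (coordPairs f z H)).r x y) (j : I) :
    (actConGen (M := S) H).r (column f z j (some x)) (column f z j (some y)) := by
  refine actConGen_le (ρ := hS.columnCon (actConGen H)) ?_ h j
  rintro ⟨x, y⟩ ⟨-, p, hp, k, hx, hy⟩
  exact (hS.columnCon_r_iff k).2 (hx ▸ hy ▸ hS.r_column_coord hp k)

theorem r_zero_of_mem_subactGen (hS : IsBrandtMonoid f z)
    (h : x ∈ subactGen (actConGen (M := M) (coordPairs f z H)) (coordZeros f z H)) (j : I) :
    (actConGen (M := S) H).r (column f z j (some x)) z := by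
  obtain ⟨c, ⟨-, -, k, -, hc⟩, m, hxc⟩ := h
  have hcm : (actConGen (M := S) H).r (column f z j (some (c <• m))) z :=
    hS.r_column_smul (o' := none) hc m j
  exact Setoid.trans' _ (hS.r_column_of_actConGen_coordPairs hxc j) hcm

theorem actConGen_le_coordCon (hS : IsBrandtMonoid f z) {s t : S}
    (h : (actConGen (M := S) H).r s t) (j : I) :
    (reesCon (actConGen (M := M) (coordPairs f z H)) (coordZeros f z H)).r
      (coord f z s j) (coord f z t j) := by
  refine actConGen_le (ρ := hS.coordCon (reesCon _ _)) (fun p hp k => ?_) h j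
  have hpk := hS.r_column_coord hp k
  cases hx : coord f z p.1 k with
  | none =>
    cases hy : coord f z p.2 k with
    | none => exact Setoid.refl' _ _
    | some y =>
      rw [hx, hy] at hpk
      have hyK : y ∈ coordZeros f z H := ⟨p, hp, k, .inr hy, Setoid.symm' _ hpk⟩
      exact .inl ⟨by simp, by simpa using subset_subactGen _ _ hyK⟩
  | some x =>
    cases hy : coord f z p.2 k with
    | none =>
      rw [hx, hy] at hpk
      have hxK : x ∈ coordZeros f z H := ⟨p, hp, k, .inl hx, hpk⟩
      exact .inl ⟨by simpa using subset_subactGen _ _ hxK, by simp⟩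
    | some y =>
      refine .inr ⟨x, rfl, y, rfl, ?_⟩
      by_cases hxy : x = y
      · exact hxy ▸ Setoid.refl' _ x
      · exact actConGen_of_mem (p := (x, y)) ⟨hxy, p, hp, k, hx, hy⟩

end IsBrandtMonoid

/-- On columns of the Brandt monoid, `ρ` is the congruence `r` on the free right act with its
subact `Z` collapsed to zero, where `Z` meets every cyclic subact in a finitely generated one. -/
structure IsColumnModel (f : I × M × I → S) (z : S) (ρ : SMulCon Sᵐᵒᵖ S)
    (r : SMulCon Mᵐᵒᵖ (Σ _ : I, M)) (Z : Set (Σ _ : I, M)) : Prop where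
  r_column : ∀ {x y}, r.r x y → ∀ j, ρ.r (column f z j (some x)) (column f z j (some y))
  r_zero_iff : ∀ j x, ρ.r (column f z j (some x)) z ↔ x ∈ Z
  eq_and_r_or_mem : ∀ {j l x y}, ρ.r (column f z j (some x)) (column f z l (some y)) →
    j = l ∧ r.r x y ∨ x ∈ Z
  exists_finite : ∀ x, ∃ D : Set M, D.Finite ∧ ∀ u : M, x <• u ∈ Z ↔
    ∃ d ∈ D, ∃ w : M, r.r (x <• u) (x <• (d * w))

theorem IsBrandtMonoid.exists_isColumnModel (hS : IsBrandtMonoid f z) (hM : RightCoherent M)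
    {ρ : SMulCon Sᵐᵒᵖ S} (hρ : IsFG ρ) : ∃ r Z, IsCoherent r ∧ IsColumnModel f z ρ r Z := by
  obtain ⟨H, hH, rfl⟩ := hρ
  set r : SMulCon Mᵐᵒᵖ (Σ _ : I, M) := actConGen (coordPairs f z H)
  have hrfg : IsFG r := ⟨_, hS.finite_coordPairs hH, rfl⟩
  have hr : IsCoherent r := hrfg.isCoherent hM
  refine ⟨r, subactGen r (coordZeros f z H), hr, ?_, ?_, ?_, ?_⟩
  · exact hS.r_column_of_actConGen_coordPairs
  · refine fun j x => ⟨fun h => ?_, fun h => hS.r_zero_of_mem_subactGen h j⟩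
    have hj := hS.actConGen_le_coordCon h j
    rw [hS.coord_column_self] at hj
    obtain ⟨hx, -⟩ | ⟨-, -, y, hy, -⟩ := hj
    · exact hx x rfl
    · rw [hS.coord_zero] at hy
      cases hy
  · intro j l x y h
    have hj := hS.actConGen_le_coordCon h j
    rw [hS.coord_column_self] at hj
    obtain ⟨hx, -⟩ | ⟨x', hx', y', hy', hr⟩ := hj
    · exact .inr (hx x rfl)
    · by_cases hjl : l = j
      · subst hjl
        rw [hS.coord_column_self] at hy'
        obtain rfl := Option.some_injective _ hx'
        obtain rfl := Option.some_injective _ hy'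
        exact .inl ⟨rfl, hr⟩
      · rw [hS.coord_column_ne hjl] at hy'
        cases hy'
  · intro x
    obtain ⟨T, hT, hsupp⟩ := hrfg.exists_finite_fst
    refine hr.exists_finite_mem_subactGen
      ((hS.finite_setOf_coordZeros hH (hT.insert x.1)).subset ?_)
    rintro c ⟨hc, s, t, hst⟩
    exact ⟨hc, (hsupp _ _ hst).imp Eq.symm And.right⟩

/-- Generators of the annihilator of an element of the `j`-th column, given generators `A` of its
annihilator over `M` and generators `D` of the right ideal of coefficients sending it to zero. -/
def columnAnnGens (f : I × M × I → S) (z : S) (j : I) (A : Set (M × M)) (D : Set M) :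
    Set (S × S) :=
  insert (1, f (j, 1, j)) ((fun a => (f (j, a.1, j), f (j, a.2, j))) '' A ∪
    (fun d => (f (j, d, j), z)) '' D)

namespace IsColumnModel

variable {ρ : SMulCon Sᵐᵒᵖ S} {r : SMulCon Mᵐᵒᵖ (Σ _ : I, M)} {Z : Set (Σ _ : I, M)}
  {j : I} {x y : Σ _ : I, M}

theorem isMeetBasis_column (hS : IsBrandtMonoid f z) (hρ : IsColumnModel f z ρ r Z)
    {C : Set (M × M)} (hC : IsMeetBasis r x y C) (j l : I) :
    IsMeetBasis ρ (column f z j (some x)) (column f z l (some y))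
      (insert (z, z) ((fun c => (f (j, c.1, j), f (l, c.2, j))) '' C)) where
  rel := by
    rintro _ (rfl | ⟨c, hc, rfl⟩)
    · simp only [op_smul_eq_mul, hS.mul_zero]
      exact ρ.refl' z
    · simp only [op_smul_eq_mul, hS.column_mul]
      exact hρ.r_column (hC.rel c hc) j
  exists_rel s t h := by
    simp only [op_smul_eq_mul] at h ⊢
    by_cases hz : ρ.r (column f z j (some x) * s) z
    · refine ⟨(z, z), .inl rfl, 1, ?_⟩
      rwa [mul_one, hS.mul_zero]
    obtain hs | ⟨m, k, hs⟩ := hS.column_mul_cases j s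
    · exact absurd (by rw [hs]) hz
    obtain ht | ⟨n, k', ht⟩ := hS.column_mul_cases l t
    · exact absurd (ht _ ▸ h) hz
    rw [hs] at hz ⊢
    rw [hs, ht] at h
    obtain ⟨rfl, hmn⟩ | hxZ := hρ.eq_and_r_or_mem h
    · obtain ⟨c, hc, w, hw⟩ := hC.exists_rel m n hmn
      refine ⟨_, .inr ⟨c, hc, rfl⟩, f (j, w, k), ?_⟩
      rw [hS.mul_eq, hS.column_mul]
      exact hρ.r_column hw k
    · exact absurd ((hρ.r_zero_iff k _).2 hxZ) hz

theorem r_of_ann_column_r (hS : IsBrandtMonoid f z) (hρ : IsColumnModel f z ρ r Z)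
    {σ : SMulCon Sᵐᵒᵖ S} (hone : σ.r 1 (f (j, 1, j)))
    (hann : ∀ m n, (ann r x).r m n → (ann (hS.columnCon σ) ⟨j, 1⟩).r m n)
    (hzero : ∀ (m : M) k, x <• m ∈ Z → σ.r (column f z k (some ((⟨j, 1⟩ : Σ _ : I, M) <• m))) z)
    {s t : S} (hst : (ann ρ (column f z j (some x))).r s t) : σ.r s t := by
  have r_mul (u : S) : σ.r u (column f z j (some ⟨j, 1⟩) * u) := by
    have := σ.smul (.op u) hone
    rwa [op_smul_eq_mul, op_smul_eq_mul, one_mul] at this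
  have r_zero {u : S} (h : ρ.r (column f z j (some x) * u) z) : σ.r u z := by
    refine σ.trans' (r_mul u) ?_
    obtain hu | ⟨m, k, hu⟩ := hS.column_mul_cases j u
    · rw [hu]
    · rw [hu] at h ⊢
      exact hzero m k ((hρ.r_zero_iff k _).1 h)
  replace hst : ρ.r (column f z j (some x) * s) (column f z j (some x) * t) := hst
  by_cases hz : ρ.r (column f z j (some x) * s) z
  · exact σ.trans' (r_zero hz) (σ.symm' (r_zero (ρ.trans' (ρ.symm' hst) hz)))
  obtain hs | ⟨m, k, hs⟩ := hS.column_mul_cases j s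
  · exact absurd (by rw [hs]) hz
  obtain ht | ⟨n, k', ht⟩ := hS.column_mul_cases j t
  · exact absurd (ht _ ▸ hst) hz
  refine σ.trans' (r_mul s) (σ.trans' ?_ (σ.symm' (r_mul t)))
  rw [hs, ht] at hst ⊢
  obtain ⟨rfl, hmn⟩ | hxZ := hρ.eq_and_r_or_mem hst
  · exact hann m n hmn k
  · rw [hs] at hz
    exact absurd ((hρ.r_zero_iff k _).2 hxZ) hz

theorem r_of_mem_columnAnnGens (hS : IsBrandtMonoid f z) (hρ : IsColumnModel f z ρ r Z)
    {A : Set (M × M)} {D : Set M} (hA : ∀ a ∈ A, (ann r x).r a.1 a.2) (hD : ∀ d ∈ D, x <• d ∈ Z)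
    {p : S × S} (hp : p ∈ columnAnnGens f z j A D) :
    (ann ρ (column f z j (some x))).r p.1 p.2 := by
  change ρ.r (column f z j (some x) * p.1) (column f z j (some x) * p.2)
  obtain rfl | ⟨a, ha, rfl⟩ | ⟨d, hd, rfl⟩ := hp
  · rw [mul_one, hS.column_mul, MulOpposite.op_one, one_smul]
  · rw [hS.column_mul, hS.column_mul]
    exact hρ.r_column (hA a ha) j
  · rw [hS.column_mul, hS.mul_zero]
    exact (hρ.r_zero_iff j _).2 (hD d hd)

theorem ann_column (hS : IsBrandtMonoid f z) (hρ : IsColumnModel f z ρ r Z) {A : Set (M × M)}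
    {D : Set M} (hA : ann r x = actConGen A)
    (hD : ∀ u : M, x <• u ∈ Z ↔ ∃ d ∈ D, ∃ w : M, r.r (x <• u) (x <• (d * w))) (j : I) :
    ann ρ (column f z j (some x)) = actConGen (columnAnnGens f z j A D) := by
  set σ : SMulCon Sᵐᵒᵖ S := actConGen (columnAnnGens f z j A D)
  have column_one (m : M) :
      column f z j (some ((⟨j, 1⟩ : Σ _ : I, M) <• m)) = f (j, m, j) :=
    congrArg (fun a => f (j, a, j)) (one_mul m)
  have hann (m n : M) (h : (ann r x).r m n) : (ann (hS.columnCon σ) ⟨j, 1⟩).r m n := by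
    rw [hA] at h
    refine actConGen_le (ρ := ann (hS.columnCon σ) ⟨j, 1⟩) (fun a ha => ?_) h
    refine (hS.columnCon_r_iff j).2 ?_
    rw [column_one, column_one]
    exact actConGen_of_mem (p := (f (j, a.1, j), f (j, a.2, j))) (.inr (.inl ⟨a, ha, rfl⟩))
  have hzero (m : M) (k : I) (h : x <• m ∈ Z) :
      σ.r (column f z k (some ((⟨j, 1⟩ : Σ _ : I, M) <• m))) z := by
    obtain ⟨d, hd, w, hw⟩ := (hD m).1 h
    have hdz : σ.r (column f z j (some ((⟨j, 1⟩ : Σ _ : I, M) <• d))) z := by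
      rw [column_one]
      exact actConGen_of_mem (p := (f (j, d, j), z)) (.inr (.inr ⟨d, hd, rfl⟩))
    refine σ.trans' (hann _ _ hw k) ?_
    rw [op_smul_mul]
    exact hS.r_column_smul (o' := none) hdz w k
  have hone : σ.r 1 (f (j, 1, j)) := actConGen_of_mem (p := (1, f (j, 1, j))) (.inl rfl)
  refine smulCon_ext fun s t => ⟨hρ.r_of_ann_column_r hS hone hann hzero,
    actConGen_le fun p hp => hρ.r_of_mem_columnAnnGens hS (fun a ha => ?_) (fun d hd => ?_) hp⟩
  · exact hA ▸ actConGen_of_mem ha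
  · exact (hD d).2 ⟨d, hd, 1, by rw [mul_one]⟩

theorem exists_isMeetBasis (hS : IsBrandtMonoid f z) (hρ : IsColumnModel f z ρ r Z)
    (hr : IsCoherent r) (a b : S) : ∃ C : Set (S × S), C.Finite ∧ IsMeetBasis ρ a b C := by
  obtain rfl | rfl | ⟨j, x, rfl⟩ := hS.exists_eq_column a
  · exact ⟨_, Set.finite_singleton _, isMeetBasis_one ρ b⟩
  · exact ⟨_, Set.finite_singleton _, isMeetBasis_zero ρ hS.zero_mul (hS.mul_zero b)⟩
  obtain rfl | rfl | ⟨l, y, rfl⟩ := hS.exists_eq_column b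
  · exact ⟨_, (Set.finite_singleton _).image _, (isMeetBasis_one ρ _).symm⟩
  · exact ⟨_, (Set.finite_singleton _).image _,
      (isMeetBasis_zero ρ hS.zero_mul (hS.mul_zero _)).symm⟩
  · obtain ⟨C, hCfin, hC⟩ := hr.exists_isMeetBasis x y
    exact ⟨_, (hCfin.image _).insert _, hρ.isMeetBasis_column hS hC j l⟩

theorem isFG_ann (hS : IsBrandtMonoid f z) (hρ : IsColumnModel f z ρ r Z) (hr : IsCoherent r)
    (hρfg : IsFG ρ) (a : S) : IsFG (ann ρ a) := by
  obtain rfl | rfl | ⟨j, x, rfl⟩ := hS.exists_eq_column a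
  · rwa [ann_one]
  · exact ⟨_, Set.finite_singleton _, ann_zero ρ hS.zero_mul⟩
  · obtain ⟨A, hAfin, hA⟩ := hr.isFG_ann x
    obtain ⟨D, hDfin, hD⟩ := hρ.exists_finite x
    exact ⟨_, ((hAfin.image _).union (hDfin.image _)).insert _, hρ.ann_column hS hA hD j⟩

end IsColumnModel

end Brandt

theorem stmt14
    {Mo : Type*} [Monoid Mo] {I : Type*} [Nonempty I]
    {S : Type*} [Monoid S] (f : I × Mo × I → S) (z : S)
    (hinj : Function.Injective f)
    (hfz : ∀ p : I × Mo × I, f p ≠ z) (hf1 : ∀ p : I × Mo × I, f p ≠ 1) (hz1 : z ≠ 1)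
    (hcover : ∀ s : S, s = 1 ∨ s = z ∨ ∃ p : I × Mo × I, f p = s)
    (hmul_eq : ∀ (i : I) (a : Mo) (j : I) (b : Mo) (l : I),
      f (i, a, j) * f (j, b, l) = f (i, a * b, l))
    (hmul_ne : ∀ (i : I) (a : Mo) (j k : I) (b : Mo) (l : I), j ≠ k →
      f (i, a, j) * f (k, b, l) = z)
    (hzmul : ∀ s : S, z * s = z ∧ s * z = z)
    (hcoh : RightCoherent Mo) :
    RightCoherent S := by
  have hS : IsBrandtMonoid f z :=
    ⟨hinj, hfz, hcover, hmul_eq, hmul_ne, fun s => (hzmul s).1, fun s => (hzmul s).2⟩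
  refine rightCoherent_iff.2 fun ρ hρ => ?_
  obtain ⟨r, Z, hr, hmodel⟩ := hS.exists_isColumnModel hcoh hρ
  exact ⟨hmodel.exists_isMeetBasis hS hr, hmodel.isFG_ann hS hr hρ⟩
end
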